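/- Let n ≥ 3 be an odd integer, K a number field of degree n with signature (r1, r2), and O an order in K. Let H⁺(O) be the subgroup of H(O) consisting of classes represented by pairs (I, δ) with δ totally positive. Then #H⁺(O) = 2^{r2} · #Cl₂⁺(O), where Cl₂⁺(O) is the 2-torsion subgroup of the narrow class group of O. -/

import Mathlib

set_option synthInstance.maxHeartbeats 1000000
set_option maxHeartbeats 1000000
open NumberField FractionalIdeal

variable (K : Type) [Field K] [NumberField K] (O : Subring K) [IsFractionRing O K]

/-- The group of pairs `(I, δ)` where `I` is an invertible fractional `O`-ideal in `K` and
`δ ∈ Kˣ` with `I² = δ·O` and `N_{K/ℚ}(δ) > 0`. -/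
noncomputable def HPairs : Subgroup ((FractionalIdeal (nonZeroDivisors O) K)ˣ × Kˣ) where
  carrier := {p | p.1 ^ 2 = toPrincipalIdeal O K p.2 ∧ 0 < Algebra.norm ℚ (p.2 : K)}
  one_mem' := by
    refine ⟨?_, ?_⟩
    · rw [Prod.fst_one, one_pow, Prod.snd_one, _root_.map_one]
    · rw [Prod.snd_one, Units.val_one, _root_.map_one]
      exact one_pos
  mul_mem' := by
    rintro a b ⟨ha1, ha2⟩ ⟨hb1, hb2⟩
    refine ⟨?_, ?_⟩
    · rw [Prod.fst_mul, mul_pow, ha1, hb1, Prod.snd_mul, _root_.map_mul]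
    · rw [Prod.snd_mul, Units.val_mul, _root_.map_mul]
      exact mul_pos ha2 hb2
  inv_mem' := by
    rintro a ⟨ha1, ha2⟩
    refine ⟨?_, ?_⟩
    · rw [Prod.fst_inv, inv_pow, ha1, Prod.snd_inv, _root_.map_inv]
    · rw [Prod.snd_inv]
      have h1 : Algebra.norm ℚ ((a.2 : K)) * Algebra.norm ℚ ((↑(a.2)⁻¹ : K)) = 1 := by
        rw [← _root_.map_mul, ← Units.val_mul, mul_inv_cancel, Units.val_one, _root_.map_one]
      have h2 : Algebra.norm ℚ ((↑(a.2)⁻¹ : K)) = (Algebra.norm ℚ ((a.2 : K)))⁻¹ :=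
        eq_inv_of_mul_eq_one_right h1
      rw [h2]
      exact inv_pos.mpr ha2

/-- The subgroup of pairs of the form `(κ·O, κ²)` for `κ ∈ Kˣ`; quotienting by it identifies
`(I, δ)` with `(κI, κ²δ)`. -/
noncomputable def EqvPairs : Subgroup ((FractionalIdeal (nonZeroDivisors O) K)ˣ × Kˣ) :=
  ((toPrincipalIdeal O K).prod (powMonoidHom 2)).range

/-- The group `H(O)` of equivalence classes of pairs `(I, δ)` with `I² = δ·O` and
`N(δ) > 0`, where `(I, δ) ∼ (κI, κ²δ)` for `κ ∈ Kˣ`. -/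
noncomputable abbrev HGroup : Type :=
  HPairs K O ⧸ Subgroup.comap (HPairs K O).subtype (EqvPairs K O)

variable {O} in
/-- The subgroup of totally positive units of `Kˣ`. -/
noncomputable def totPosUnits : Subgroup Kˣ where
  carrier := {u | ∀ φ : K →+* ℝ, 0 < φ u}
  one_mem' := by intro φ; rw [Units.val_one, _root_.map_one]; exact one_pos
  mul_mem' := by
    intro a b ha hb φ
    rw [Units.val_mul, _root_.map_mul]
    exact mul_pos (ha φ) (hb φ)
  inv_mem' := by
    intro a ha φ
    rw [Units.val_inv_eq_inv_val, map_inv₀]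
    exact inv_pos.mpr (ha φ)

/-- The subgroup `H⁺(O)` of `H(O)` consisting of classes represented by a pair `(I, δ)`
with `δ` totally positive. -/
noncomputable def HPlus : Subgroup (HGroup K O) :=
  haveI : (Subgroup.comap (HPairs K O).subtype (EqvPairs K O)).Normal :=
    Subgroup.normal_of_comm _
  Subgroup.map (QuotientGroup.mk' _)
    (Subgroup.comap (HPairs K O).subtype
      (Subgroup.comap (MonoidHom.snd ((FractionalIdeal (nonZeroDivisors O) K)ˣ) Kˣ)
        (totPosUnits K)))

/-- The narrow class group of the order `O`: the quotient of the group of invertible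
fractional `O`-ideals in `K` by principal fractional ideals with totally positive generator. -/
noncomputable abbrev NarrowClassGroupOrd : Type :=
  (FractionalIdeal (nonZeroDivisors O) K)ˣ ⧸
    Subgroup.map (toPrincipalIdeal O K) (totPosUnits K)

theorem aux_index_sq (W : Type*) [CommGroup W] (r : ℕ) (e : Additive W ≃+ (Fin r → ℤ)) :
    (powMonoidHom 2 : W →* W).range.index = 2 ^ r := by
  let f : (Fin r → ℤ) →+ (Fin r → ZMod 2) :=
    { toFun := fun v i => (v i : ZMod 2)
      map_zero' := by ext; simp
      map_add' := by intros; ext; simp }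
  let g : W →* Multiplicative (Fin r → ZMod 2) :=
    AddMonoidHom.toMultiplicativeRight (f.comp e.toAddMonoidHom)
  have hg : ∀ w, g w = Multiplicative.ofAdd (f (e (Additive.ofMul w))) := fun w => rfl
  have hker : (powMonoidHom 2 : W →* W).range = g.ker := by
    ext w
    rw [MonoidHom.mem_ker, hg, ofAdd_eq_one]
    constructor
    · rintro ⟨x, rfl⟩
      ext i
      have : e (Additive.ofMul (x ^ 2)) = 2 • e (Additive.ofMul x) := by
        rw [ofMul_pow, map_nsmul]
      simp only [powMonoidHom_apply, this]
      simp only [f, AddMonoidHom.coe_mk, ZeroHom.coe_mk, Pi.smul_apply, Pi.zero_apply]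
      rw [ZMod.intCast_zmod_eq_zero_iff_dvd]
      simp
    · intro h
      have h2 : ∀ i, ∃ c, e (Additive.ofMul w) i = 2 * c := by
        intro i
        have := congrFun h i
        simp only [f, AddMonoidHom.coe_mk, ZeroHom.coe_mk, Pi.zero_apply] at this
        rw [ZMod.intCast_zmod_eq_zero_iff_dvd] at this
        exact this
      choose c hc using h2
      refine ⟨(e.symm c).toMul, ?_⟩
      apply Additive.ofMul.injective
      apply e.injective
      rw [powMonoidHom_apply, ofMul_pow, map_nsmul, ofMul_toMul, e.apply_symm_apply]
      ext i
      simp [hc]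
  have hs : Function.Surjective g := by
    intro v
    choose c hc using fun i => ZMod.intCast_surjective (v.toAdd i)
    refine ⟨(e.symm c).toMul, ?_⟩
    rw [hg, ofMul_toMul, e.apply_symm_apply]
    apply Multiplicative.toAdd.injective
    ext i
    simp [f, hc]
  rw [hker, Subgroup.index_ker, MonoidHom.range_eq_top.mpr hs]
  rw [Nat.card_congr (Subgroup.topEquiv.toEquiv), Nat.card_congr Multiplicative.toAdd]
  simp

theorem aux_totPos_iff (u : Kˣ) : u ∈ totPosUnits K ↔
    ∀ w : {w : InfinitePlace K // w.IsReal}, 0 < InfinitePlace.embedding_of_isReal w.2 (u : K) := by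
  constructor
  · intro h w
    exact h _
  · intro h φ
    have hr : ComplexEmbedding.IsReal (Complex.ofRealHom.comp φ) := by
      rw [ComplexEmbedding.isReal_iff]
      ext x
      simp [ComplexEmbedding.conjugate_coe_eq]
    have hw : (InfinitePlace.mk (Complex.ofRealHom.comp φ)).IsReal := ⟨_, hr, rfl⟩
    have := h ⟨_, hw⟩
    have h2 := InfinitePlace.embedding_of_isReal_apply hw (u : K)
    rw [InfinitePlace.embedding_mk_eq_of_isReal hr] at h2
    have h3 : InfinitePlace.embedding_of_isReal hw (u : K) = φ u := by
      apply Complex.ofReal_injective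
      rw [h2]
      rfl
    rw [← h3]
    exact this

theorem aux_norm_pos (u : Kˣ) (hu : u ∈ totPosUnits K) : 0 < Algebra.norm ℚ (u : K) := by
  classical
  have key : ∃ r : ℝ, 0 < r ∧ ∏ φ : K →+* ℂ, φ (u : K) = (r : ℂ) := by
    rw [← Finset.prod_fiberwise Finset.univ InfinitePlace.mk (fun φ : K →+* ℂ => φ (u : K))]
    refine Finset.prod_induction _ (fun z : ℂ => ∃ r : ℝ, 0 < r ∧ z = r) ?_ ?_ ?_
    · rintro _ _ ⟨a, ha, rfl⟩ ⟨b, hb, rfl⟩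
      exact ⟨a * b, mul_pos ha hb, by push_cast; rfl⟩
    · exact ⟨1, one_pos, by simp⟩
    · intro w _
      have hne : w.embedding (u : K) ≠ 0 := by simp
      have hset : (Finset.univ.filter fun φ : K →+* ℂ => InfinitePlace.mk φ = w) =
          {w.embedding, ComplexEmbedding.conjugate w.embedding} := by
        ext φ
        simp only [Finset.mem_filter, Finset.mem_univ, true_and, Finset.mem_insert,
          Finset.mem_singleton]
        conv_lhs => rw [← InfinitePlace.mk_embedding w]
        rw [eq_comm, InfinitePlace.mk_eq_iff]
        constructor
        · rintro (h | h)
          · exact Or.inl h.symm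
          · exact Or.inr h.symm
        · rintro (h | h)
          · exact Or.inl h.symm
          · exact Or.inr h.symm
      rw [hset]
      by_cases hw : w.IsReal
      · rw [InfinitePlace.conjugate_embedding_eq_of_isReal hw, Finset.pair_eq_singleton,
          Finset.prod_singleton]
        exact ⟨_, hu (InfinitePlace.embedding_of_isReal hw),
          (InfinitePlace.embedding_of_isReal_apply hw _).symm⟩
      · rw [Finset.prod_pair]
        · refine ⟨Complex.normSq (w.embedding (u : K)), Complex.normSq_pos.mpr hne, ?_⟩
          rw [ComplexEmbedding.conjugate_coe_eq, Complex.mul_conj]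
        · intro h
          apply hw
          rw [InfinitePlace.isReal_iff, ComplexEmbedding.isReal_iff]
          exact h.symm
  obtain ⟨r, hr, h⟩ := key
  have h1 := Algebra.norm_eq_prod_embeddings ℚ ℂ (u : K)
  rw [← Fintype.prod_equiv (RingHom.equivRatAlgHom K ℂ) (fun f => f (u : K))
      (fun φ => φ (u : K)) fun _ => by simp [RingHom.equivRatAlgHom_apply], h] at h1
  have h2 : ((Algebra.norm ℚ (u : K) : ℚ) : ℝ) = r := by
    rw [eq_ratCast] at h1
    exact_mod_cast h1
  have h3 : (0 : ℝ) < ((Algebra.norm ℚ (u : K) : ℚ) : ℝ) := by rw [h2]; exact hr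
  exact_mod_cast h3

theorem aux_approx (s : InfinitePlace K → K) : ∃ x : K, ∀ v : InfinitePlace K, v (x - s v) < 1 := by
  have hd := InfinitePlace.denseRange_algebraMap_pi K
  obtain ⟨x, hx⟩ := hd.exists_dist_lt (fun v => WithAbs.toAbs v.1 (s v)) one_pos
  refine ⟨x, fun v => ?_⟩
  have := (dist_pi_lt_iff one_pos).mp hx v
  rw [dist_comm, dist_eq_norm] at this
  exact this

theorem aux_index_totPos (r1 : ℕ) (hne : Nonempty {w : InfinitePlace K // w.IsReal})
    (hr1 : Nat.card {w : InfinitePlace K // w.IsReal} = r1) :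
    (totPosUnits K).index = 2 ^ r1 := by
  classical
  let g : Kˣ →* ({w : InfinitePlace K // w.IsReal} → SignTypeˣ) :=
    MonoidHom.pi fun w => (Units.map (signHom : ℝ →*₀ SignType).toMonoidHom).comp
      (Units.map (InfinitePlace.embedding_of_isReal w.2).toMonoidHom)
  have hg : ∀ u w, ((g u w : SignTypeˣ) : SignType) =
    SignType.sign (InfinitePlace.embedding_of_isReal w.2 (u : K)) := fun u w => rfl
  have hker : totPosUnits K = g.ker := by
    ext u
    rw [aux_totPos_iff, MonoidHom.mem_ker, funext_iff]
    refine forall_congr' fun w => ?_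
    rw [← sign_eq_one_iff, ← hg, Pi.one_apply, Units.ext_iff, Units.val_one]
  have hs : Function.Surjective g := by
    intro s
    let t : InfinitePlace K → K := fun v =>
      if h : v.IsReal then (((s ⟨v, h⟩ : SignTypeˣ) : SignType) : K) else 1
    obtain ⟨x, hx⟩ := aux_approx K t
    have hsg : ∀ w : {w : InfinitePlace K // w.IsReal},
        SignType.sign (InfinitePlace.embedding_of_isReal w.2 x) = ((s w : SignTypeˣ) : SignType) := by
      intro w
      have h1 := hx w.1
      rw [← InfinitePlace.norm_embedding_of_isReal w.2, map_sub] at h1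
      have ht : t w.1 = (((s w : SignTypeˣ) : SignType) : K) := by
        simp [t, w.2]
      rw [ht, Real.norm_eq_abs, abs_lt] at h1
      have hne : ((s w : SignTypeˣ) : SignType) ≠ 0 := Units.ne_zero _
      rcases hh : ((s w : SignTypeˣ) : SignType) with _ | _ | _
      · exact absurd hh hne
      · rw [hh] at h1
        simp at h1
        exact sign_eq_neg_one_iff.mpr (by linarith)
      · rw [hh] at h1
        simp at h1
        exact sign_eq_one_iff.mpr (by linarith)
    have hx0 : x ≠ 0 := by
      rintro rfl
      obtain ⟨w⟩ := hne
      have h1 := hsg w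
      rw [map_zero, sign_zero] at h1
      exact Units.ne_zero (s w) h1.symm
    refine ⟨Units.mk0 x hx0, ?_⟩
    ext w
    rw [hg, Units.val_mk0, hsg]
  rw [hker, Subgroup.index_ker, MonoidHom.range_eq_top.mpr hs]
  rw [Nat.card_congr (Subgroup.topEquiv.toEquiv), Nat.card_fun, hr1]
  congr 1
  rw [Nat.card_eq_fintype_card]
  decide

theorem aux_mem_ker (u : Kˣ) : u ∈ (toPrincipalIdeal O K).ker ↔
    (u : K) ∈ O ∧ ((u⁻¹ : Kˣ) : K) ∈ O := by
  have key : ∀ v : Kˣ, v ∈ (toPrincipalIdeal O K).ker → (v : K) ∈ O := by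
    intro v hv
    rw [MonoidHom.mem_ker, toPrincipalIdeal_eq_iff, Units.val_one] at hv
    have h1 := mem_spanSingleton_self (nonZeroDivisors O) (v : K)
    rw [hv, mem_one_iff] at h1
    obtain ⟨x, hx⟩ := h1
    rw [← hx]
    exact x.2
  constructor
  · intro h
    exact ⟨key u h, key _ (inv_mem h)⟩
  · rintro ⟨h1, h2⟩
    rw [MonoidHom.mem_ker, toPrincipalIdeal_eq_iff, Units.val_one]
    have l1 : spanSingleton (nonZeroDivisors O) (u : K) ≤ 1 := by
      rw [spanSingleton_le_iff_mem, mem_one_iff]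
      exact ⟨⟨_, h1⟩, rfl⟩
    have l2 : spanSingleton (nonZeroDivisors O) ((u⁻¹ : Kˣ) : K) ≤ 1 := by
      rw [spanSingleton_le_iff_mem, mem_one_iff]
      exact ⟨⟨_, h2⟩, rfl⟩
    refine le_antisymm l1 ?_
    calc (1 : FractionalIdeal (nonZeroDivisors O) K)
        = spanSingleton (nonZeroDivisors O) (u : K) *
          spanSingleton (nonZeroDivisors O) ((u⁻¹ : Kˣ) : K) := by
          rw [spanSingleton_mul_spanSingleton, Units.mul_inv, spanSingleton_one]
      _ ≤ spanSingleton (nonZeroDivisors O) (u : K) * 1 := by gcongr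
      _ = _ := mul_one _

theorem aux_integral [Module.Finite ℤ O] (x : K) (hx : x ∈ O) : IsIntegral ℤ x := by
  have h : IsIntegral ℤ (⟨x, hx⟩ : O) := IsIntegral.of_finite ℤ _
  exact h.map (O.subtype.toIntAlgHom)

theorem aux_conductor [Module.Finite ℤ O] : ∃ b : 𝓞 K, b ≠ 0 ∧ ∀ x : 𝓞 K, ((b * x : 𝓞 K) : K) ∈ O := by
  obtain ⟨s, hs⟩ := (Module.Finite.fg_top : (⊤ : Submodule ℤ (𝓞 K)).FG)
  obtain ⟨b, hb⟩ := IsLocalization.exist_integer_multiples (nonZeroDivisors O) s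
    (fun x : 𝓞 K => (x : K))
  refine ⟨⟨((b : O) : K), aux_integral K O _ (b : O).2⟩, ?_, ?_⟩
  · intro h
    have h1 : ((b : O) : K) = 0 := congrArg (fun z : 𝓞 K => (z : K)) h
    exact nonZeroDivisors.ne_zero b.2 (Subtype.ext h1)
  · intro x
    have hx : x ∈ Submodule.span ℤ (s : Set (𝓞 K)) := by rw [hs]; trivial
    change ((b : O) : K) * (x : K) ∈ O
    induction hx using Submodule.span_induction with
    | mem x h =>
      obtain ⟨y, hy⟩ := hb x h
      have : ((b : O) : K) * (x : K) = (y : K) := hy.symm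
      rw [this]
      exact y.2
    | zero => simp
    | add x y _ _ h1 h2 =>
      have := add_mem h1 h2
      rw [← mul_add] at this
      exact this
    | smul a x _ h =>
      have h5 := zsmul_mem h a
      rw [← mul_smul_comm] at h5
      exact h5

theorem aux_power [Module.Finite ℤ O] : ∃ N : ℕ, 0 < N ∧ ∀ e : (𝓞 K)ˣ,
    ((e ^ N : (𝓞 K)ˣ) : K) ∈ O := by
  obtain ⟨b, hb, h⟩ := aux_conductor K O
  have hfin : Finite (𝓞 K ⧸ Ideal.span {b}) :=
    Ideal.finiteQuotientOfFreeOfNeBot _ (by simpa using hb)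
  refine ⟨Nat.card (𝓞 K ⧸ Ideal.span {b})ˣ, Nat.card_pos, fun e => ?_⟩
  set N := Nat.card (𝓞 K ⧸ Ideal.span {b})ˣ
  have h1 : (Units.map (Ideal.Quotient.mk (Ideal.span {b})).toMonoidHom e) ^ N = 1 :=
    pow_card_eq_one'
  have h2 : Ideal.Quotient.mk (Ideal.span {b}) ((e : 𝓞 K) ^ N) = Ideal.Quotient.mk (Ideal.span {b}) 1 := by
    have := congrArg Units.val h1
    simpa using this
  rw [Ideal.Quotient.eq, Ideal.mem_span_singleton] at h2
  obtain ⟨c, hc⟩ := h2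
  have h3 : ((e ^ N : (𝓞 K)ˣ) : 𝓞 K) = 1 + b * c := by
    rw [Units.val_pow_eq_pow_val, ← hc]; ring
  rw [h3, map_add, map_one]
  exact add_mem (one_mem _) (h c)

theorem aux_log : ∃ g : (𝓞 K)ˣ →* Multiplicative (Fin (Units.rank K) → ℤ),
    Function.Surjective g ∧ ∀ e, g e = 1 → e ∈ Units.torsion K := by
  let b := (Units.basisUnitLattice K).equivFun
  have hmem : ∀ x : Additive (𝓞 K)ˣ, Units.logEmbedding K x ∈ Units.unitLattice K := by
    intro x
    exact ⟨x, trivial, rfl⟩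
  let h : Additive (𝓞 K)ˣ →+ Units.unitLattice K :=
    { toFun := fun x => ⟨Units.logEmbedding K x, hmem x⟩
      map_zero' := Subtype.ext (map_zero _)
      map_add' := fun x y => Subtype.ext (map_add _ x y) }
  refine ⟨AddMonoidHom.toMultiplicativeRight (b.toAddEquiv.toAddMonoidHom.comp h), ?_, ?_⟩
  · intro v
    obtain ⟨m, hm⟩ := b.surjective v.toAdd
    obtain ⟨e, -, he⟩ := m.2
    refine ⟨e.toMul, ?_⟩
    have h1 : h e = m := Subtype.ext he
    change Multiplicative.ofAdd (b (h e)) = v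
    rw [h1, hm]
    rfl
  · intro e he
    have h1 : b (h (Additive.ofMul e)) = 0 := he
    have h2 : h (Additive.ofMul e) = 0 := b.map_eq_zero_iff.mp h1
    exact Units.dirichletUnitTheorem.logEmbedding_eq_zero_iff.mp (congrArg Subtype.val h2)

theorem aux_units [Module.Finite ℤ O] (hne : Nonempty {w : InfinitePlace K // w.IsReal}) :
    (((toPrincipalIdeal O K).ker ⊓ totPosUnits K).map (powMonoidHom 2)).relIndex
      ((toPrincipalIdeal O K).ker ⊓ totPosUnits K) = 2 ^ Units.rank K := by
  set V := (toPrincipalIdeal O K).ker ⊓ totPosUnits K with hV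
  let ι : (𝓞 K)ˣ →* Kˣ := Units.map (algebraMap (𝓞 K) K).toMonoidHom
  have hι : ∀ e : (𝓞 K)ˣ, ((ι e : Kˣ) : K) = ((e : 𝓞 K) : K) := fun e => rfl
  -- units of `O` come from units of the maximal order
  have hlift : ∀ v : V, ∃ e : (𝓞 K)ˣ, ι e = v := by
    intro v
    have h := (aux_mem_ker K O v).mp v.2.1
    refine ⟨⟨⟨(v : Kˣ), aux_integral K O _ h.1⟩, ⟨((v : Kˣ)⁻¹ : Kˣ), aux_integral K O _ h.2⟩, ?_, ?_⟩, ?_⟩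
    · apply RingOfIntegers.ext; exact Units.mul_inv _
    · apply RingOfIntegers.ext; exact Units.inv_mul _
    · ext; rfl
  have hιinj : Function.Injective ι := by
    intro a b hab
    apply Units.ext
    apply RingOfIntegers.ext
    exact congrArg Units.val hab
  choose l hl using hlift
  let lift : V →* (𝓞 K)ˣ :=
    { toFun := l
      map_one' := hιinj (by rw [hl, map_one]; rfl)
      map_mul' := fun a b => hιinj (by rw [hl, map_mul, hl, hl]; rfl) }
  obtain ⟨g, hgs, hgk⟩ := aux_log K
  let F : V →* Multiplicative (Fin (Units.rank K) → ℤ) := g.comp lift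
  have hFinj : Function.Injective F := by
    rw [injective_iff_map_eq_one]
    intro v hv
    have h1 : l v ∈ Units.torsion K := hgk _ hv
    rw [Units.mem_torsion] at h1
    obtain ⟨w⟩ := hne
    have h2 := h1 w.1
    rw [← InfinitePlace.norm_embedding_of_isReal w.2] at h2
    have h3 : (algebraMap (𝓞 K) K) (l v) = ((v : Kˣ) : K) := by
      have := hι (l v)
      rw [hl] at this
      exact this.symm
    rw [h3, Real.norm_eq_abs, abs_of_pos (v.2.2 _)] at h2
    apply Subtype.ext
    apply Units.ext
    apply (InfinitePlace.embedding_of_isReal w.2).injective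
    rw [h2]
    simp
  let FA : Additive V →ₗ[ℤ] (Fin (Units.rank K) → ℤ) := (MonoidHom.toAdditiveLeft F).toIntLinearMap
  have hFAinj : Function.Injective FA := hFinj
  obtain ⟨N, hN, hpow⟩ := aux_power K O
  have hrange : ∀ m : (Fin (Units.rank K) → ℤ), ((2 * N : ℕ) : ℤ) • m ∈ LinearMap.range FA := by
    intro m
    obtain ⟨e, he⟩ := hgs (Multiplicative.ofAdd m)
    have hmem : ι (e ^ (2 * N)) ∈ V := by
      refine ⟨?_, ?_⟩
      · refine (aux_mem_ker K O _).mpr ?_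
        have hx : ∀ e : (𝓞 K)ˣ, ((ι (e ^ (2 * N)) : Kˣ) : K) ∈ O := by
          intro e
          rw [mul_comm, pow_mul, map_pow, Units.val_pow_eq_pow_val]
          exact pow_mem (hpow e) 2
        refine ⟨hx e, ?_⟩
        rw [← map_inv, ← inv_pow]
        exact hx _
      · intro φ
        rw [mul_comm, pow_mul, map_pow, Units.val_pow_eq_pow_val, map_pow]
        exact sq_pos_of_ne_zero (by simp)
    refine ⟨Additive.ofMul ⟨_, hmem⟩, ?_⟩
    have hle : l ⟨_, hmem⟩ = e ^ (2 * N) := hιinj (hl _)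
    change Multiplicative.toAdd (g (l ⟨_, hmem⟩)) = _
    rw [hle, map_pow, he, natCast_zsmul]
    rfl
  have hfr : Module.finrank ℤ (LinearMap.range FA) = Units.rank K := by
    conv_rhs => rw [← Module.finrank_fin_fun (n := Units.rank K) ℤ]
    apply le_antisymm
    · exact Submodule.finrank_le _
    · let sm : (Fin (Units.rank K) → ℤ) →ₗ[ℤ] LinearMap.range FA :=
        LinearMap.codRestrict _ (LinearMap.lsmul ℤ (Fin (Units.rank K) → ℤ) ((2 * N : ℕ) : ℤ)) hrange
      refine LinearMap.finrank_le_finrank_of_injective (f := sm) ?_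
      intro a b hab
      have h1 : ((2 * N : ℕ) : ℤ) • a = ((2 * N : ℕ) : ℤ) • b := congrArg Subtype.val hab
      exact smul_right_injective (Fin (Units.rank K) → ℤ) (by positivity) h1
  let e1 : Additive V ≃ₗ[ℤ] LinearMap.range FA := LinearEquiv.ofInjective FA hFAinj
  let e2 := (Module.finBasisOfFinrankEq ℤ (LinearMap.range FA) hfr).equivFun
  have := aux_index_sq V _ (e1.trans e2).toAddEquiv
  rw [← this, Subgroup.relIndex]
  congr 1
  ext v
  rw [Subgroup.mem_subgroupOf]
  constructor
  · rintro ⟨x, hx, h⟩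
    exact ⟨⟨x, hx⟩, Subtype.ext h⟩
  · rintro ⟨x, h⟩
    exact ⟨x, x.2, congrArg Subtype.val h⟩

theorem aux_sq_mem (x : Kˣ) : x ^ 2 ∈ totPosUnits K := by
  intro φ
  rw [Units.val_pow_eq_pow_val, map_pow]
  exact sq_pos_of_ne_zero (by simp)

theorem aux_mem_HPairs (p : (FractionalIdeal (nonZeroDivisors O) K)ˣ × Kˣ) :
    p ∈ HPairs K O ↔ p.1 ^ 2 = toPrincipalIdeal O K p.2 ∧ 0 < Algebra.norm ℚ (p.2 : K) :=
  Iff.rfl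

theorem aux_Eqv_le : EqvPairs K O ≤
    HPairs K O ⊓ Subgroup.comap (MonoidHom.snd _ _) (totPosUnits K) := by
  rintro _ ⟨x, rfl⟩
  refine ⟨?_, aux_sq_mem K x⟩
  refine (aux_mem_HPairs K O _).mpr ?_
  refine ⟨?_, aux_norm_pos K _ (aux_sq_mem K x)⟩
  simp only [MonoidHom.prod_apply, powMonoidHom_apply, map_pow]

theorem aux_card_HPlus : Nat.card (HPlus K O) = (EqvPairs K O).relIndex
    (HPairs K O ⊓ Subgroup.comap (MonoidHom.snd _ _) (totPosUnits K)) := by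
  unfold HPlus
  rw [← Subgroup.relIndex_ker, QuotientGroup.ker_mk',
    ← Subgroup.relIndex_subgroupOf (H := EqvPairs K O) (L := HPairs K O) inf_le_left,
    Subgroup.inf_subgroupOf_left]
  rfl

theorem aux_relIndex_one (r1 : ℕ) (hpos : 0 < r1)
    (hne : Nonempty {w : InfinitePlace K // w.IsReal})
    (hr1 : Nat.card {w : InfinitePlace K // w.IsReal} = r1) :
    ((totPosUnits K).map ((toPrincipalIdeal O K).prod (powMonoidHom 2))).relIndex
      (EqvPairs K O) = 2 ^ (r1 - 1) := by
  have hidx := aux_index_totPos K r1 hne hr1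
  set f := (toPrincipalIdeal O K).prod (powMonoidHom 2 : Kˣ →* Kˣ) with hf
  have hE : EqvPairs K O = Subgroup.map f ⊤ := by
    rw [← MonoidHom.range_eq_map]; rfl
  rw [hE, Subgroup.relIndex_map_map, top_sup_eq, Subgroup.relIndex_top_right]
  have h2 : (totPosUnits K).relIndex (totPosUnits K ⊔ f.ker) = 2 := by
    rw [Subgroup.relIndex_sup_left, Subgroup.relIndex_eq_two_iff]
    obtain ⟨w⟩ := hne
    have hneg : (-1 : Kˣ) ∉ totPosUnits K := by
      intro h
      have := h (InfinitePlace.embedding_of_isReal w.2)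
      rw [Units.val_neg, Units.val_one, map_neg, map_one] at this
      linarith
    refine ⟨-1, ?_, ?_⟩
    · rw [MonoidHom.mem_ker, hf, MonoidHom.prod_apply, Prod.mk_eq_one]
      refine ⟨?_, by simp⟩
      rw [← MonoidHom.mem_ker, aux_mem_ker]
      constructor
      · simp
      · simp
    · intro b hb
      rw [MonoidHom.mem_ker, hf, MonoidHom.prod_apply, Prod.mk_eq_one] at hb
      have h3 : (b : K) ^ 2 = 1 := by
        have := congrArg Units.val hb.2
        simpa using this
      rcases (sq_eq_one_iff.mp h3) with h | h
      · have : b = 1 := Units.ext h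
        subst this
        right
        exact ⟨one_mem _, by simpa using hneg⟩
      · have : b = -1 := Units.ext (by simpa using h)
        subst this
        left
        exact ⟨by simpa using one_mem (totPosUnits K), hneg⟩
  have h3 := Subgroup.relIndex_mul_index (le_sup_left : totPosUnits K ≤ totPosUnits K ⊔ f.ker)
  rw [h2, hidx] at h3
  obtain ⟨m, rfl⟩ : ∃ m, r1 = m + 1 := ⟨r1 - 1, by omega⟩
  rw [pow_succ] at h3
  simp only [Nat.add_sub_cancel]
  omega

theorem aux_card_image : Nat.card ((HPairs K O ⊓ Subgroup.comap (MonoidHom.snd _ _)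
      (totPosUnits K)).map ((QuotientGroup.mk' (Subgroup.map (toPrincipalIdeal O K)
        (totPosUnits K))).comp (MonoidHom.fst _ Kˣ))) =
    Nat.card {c : NarrowClassGroupOrd K O // c ^ 2 = 1} := by
  refine Nat.card_congr (Equiv.subtypeEquivRight fun c => ?_)
  constructor
  · rintro ⟨p, ⟨hp, hp2⟩, rfl⟩
    replace hp := (aux_mem_HPairs K O _).mp hp
    rw [← map_pow, MonoidHom.comp_apply]
    refine (QuotientGroup.eq_one_iff _).mpr ?_
    exact ⟨p.2, hp2, hp.1.symm⟩
  · intro h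
    obtain ⟨I, rfl⟩ := QuotientGroup.mk_surjective c
    rw [← QuotientGroup.mk_pow, QuotientGroup.eq_one_iff] at h
    obtain ⟨δ, hδ, h⟩ := h
    exact ⟨(I, δ), ⟨⟨h.symm, aux_norm_pos K δ hδ⟩, hδ⟩, rfl⟩

theorem aux_relIndex_two [Module.Finite ℤ O]
    (hne : Nonempty {w : InfinitePlace K // w.IsReal}) :
    ((totPosUnits K).map ((toPrincipalIdeal O K).prod (powMonoidHom 2))).relIndex
      (HPairs K O ⊓ Subgroup.comap (MonoidHom.snd _ _) (totPosUnits K)) =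
    2 ^ Units.rank K * Nat.card {c : NarrowClassGroupOrd K O // c ^ 2 = 1} := by
  rw [← aux_card_image, ← Subgroup.relIndex_ker, ← aux_units K O hne]
  set π := ((QuotientGroup.mk' (Subgroup.map (toPrincipalIdeal O K)
        (totPosUnits K))).comp (MonoidHom.fst _ Kˣ)) with hπ
  set D := (totPosUnits K).map ((toPrincipalIdeal O K).prod (powMonoidHom 2)) with hD
  set P := HPairs K O ⊓ Subgroup.comap (MonoidHom.snd _ _) (totPosUnits K) with hP
  set V := (toPrincipalIdeal O K).ker ⊓ totPosUnits K with hV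
  have hker : ∀ p, p ∈ π.ker ↔ p.1 ∈ Subgroup.map (toPrincipalIdeal O K) (totPosUnits K) := by
    intro p
    rw [MonoidHom.mem_ker]
    exact QuotientGroup.eq_one_iff _
  have hDk : D ≤ π.ker := by
    rintro _ ⟨x, hx, rfl⟩
    rw [hker]
    exact ⟨x, hx, rfl⟩
  have hDP : D ≤ P := by
    rintro _ ⟨x, _, rfl⟩
    exact aux_Eqv_le K O ⟨x, rfl⟩
  have hQ : π.ker ⊓ P = D ⊔ V.map (MonoidHom.inr _ _) := by
    apply le_antisymm
    · rintro ⟨I, δ⟩ ⟨h1, h2, h3⟩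
      replace h1 := (hker _).mp h1
      obtain ⟨κ, hκ, h1⟩ := h1
      have h4 : I ^ 2 = toPrincipalIdeal O K δ := h2.1
      have h1' : toPrincipalIdeal O K κ = I := h1
      have h3' : δ ∈ totPosUnits K := h3
      have : ((I, δ) : (FractionalIdeal (nonZeroDivisors O) K)ˣ × Kˣ) =
          ((toPrincipalIdeal O K).prod (powMonoidHom 2)) κ *
          (MonoidHom.inr _ _) ((κ ^ 2)⁻¹ * δ) := by
        ext1
        · simp [← h1']
        · simp
      rw [this]
      refine Subgroup.mul_mem_sup ⟨κ, hκ, rfl⟩ ⟨_, ⟨?_, ?_⟩, rfl⟩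
      · change _ ∈ (toPrincipalIdeal O K).ker
        rw [MonoidHom.mem_ker, map_mul, map_inv, map_pow, h1', h4, inv_mul_cancel]
      · exact (totPosUnits K).mul_mem ((totPosUnits K).inv_mem (aux_sq_mem K κ)) h3'
    · refine sup_le (le_inf hDk hDP) ?_
      rintro _ ⟨u, ⟨hu1, hu2⟩, rfl⟩
      have hu1' : toPrincipalIdeal O K u = 1 := hu1
      refine ⟨?_, ⟨?_, aux_norm_pos K u hu2⟩, hu2⟩
      · refine (hker _).mpr ?_
        exact one_mem _
      · simp [hu1', -toPrincipalIdeal_eq_iff]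
  have h1 := Subgroup.relIndex_inf_mul_relIndex D π.ker P
  rw [inf_eq_left.mpr hDk, hQ, Subgroup.relIndex_sup_left, ← Subgroup.relIndex_comap] at h1
  rw [← h1]
  congr 1
  have hc : Subgroup.comap (MonoidHom.inr _ _) D = V.map (powMonoidHom 2) := by
    ext u
    constructor
    · rintro ⟨κ, hκ, h⟩
      have ha : toPrincipalIdeal O K κ = 1 := congrArg Prod.fst h
      exact ⟨κ, ⟨ha, hκ⟩, congrArg Prod.snd h⟩
    · rintro ⟨κ, ⟨ha, hκ⟩, h⟩
      exact ⟨κ, hκ, Prod.ext ha h⟩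
  rw [hc]

/-- **The order of `H⁺(O)`.** For an order `O` in a degree `n` number field `K` of signature
`(r1, r2)`, with `n ≥ 3` odd, one has `#H⁺(O) = 2^(r2) · #Cl₂⁺(O)`. -/
theorem card_HPlus_eq (n r1 r2 : ℕ) (hodd : Odd n) (hn : 3 ≤ n)
    (hdeg : Module.finrank ℚ K = n)
    (hr1 : Nat.card {w : InfinitePlace K // w.IsReal} = r1)
    (hr2 : Nat.card {w : InfinitePlace K // w.IsComplex} = r2)
    [Module.Finite ℤ O] :
    Nat.card (HPlus K O) =
      2 ^ r2 * Nat.card {c : NarrowClassGroupOrd K O // c ^ 2 = 1} := by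
  have hr1' : InfinitePlace.nrRealPlaces K = r1 := by
    classical
    rw [← hr1, Nat.card_eq_fintype_card]
  have hr2' : InfinitePlace.nrComplexPlaces K = r2 := by
    classical
    rw [← hr2, Nat.card_eq_fintype_card]
  have hpos : 0 < r1 := by
    rw [← hr1']
    exact InfinitePlace.nrRealPlaces_pos_of_odd_finrank (by rw [hdeg]; exact hodd)
  have hne : Nonempty {w : InfinitePlace K // w.IsReal} := by
    by_contra h
    rw [not_nonempty_iff] at h
    rw [Nat.card_of_isEmpty] at hr1
    omega
  have hrank : Units.rank K = r1 - 1 + r2 := by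
    rw [Units.rank, InfinitePlace.card_eq_nrRealPlaces_add_nrComplexPlaces, hr1', hr2']
    omega
  set P : Subgroup ((FractionalIdeal (nonZeroDivisors O) K)ˣ × Kˣ) :=
    HPairs K O ⊓ Subgroup.comap (MonoidHom.snd _ _) (totPosUnits K) with hP
  have h1 : Nat.card (HPlus K O) = (EqvPairs K O).relIndex P := aux_card_HPlus K O
  have h2 : ((totPosUnits K).map ((toPrincipalIdeal O K).prod (powMonoidHom 2))).relIndex
      (EqvPairs K O) = 2 ^ (r1 - 1) := aux_relIndex_one K O r1 hpos hne hr1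
  have h3 := aux_relIndex_two K O hne
  have h4 := Subgroup.relIndex_mul_relIndex
    ((totPosUnits K).map ((toPrincipalIdeal O K).prod (powMonoidHom 2))) (EqvPairs K O) P
    (by rintro _ ⟨x, _, rfl⟩; exact ⟨x, rfl⟩) (aux_Eqv_le K O)
  rw [h2, ← h1, h3, hrank, pow_add, mul_assoc] at h4
  exact Nat.eq_of_mul_eq_mul_left (by positivity) h4
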